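/- Let H be a group scheme over a field k. If the underlying reduced closed subscheme H_red of H is geometrically reduced over k, then H_red is a closed subgroup scheme of H (i.e. the group law, unit and inverse of H restrict to H_red, making it a group scheme and the inclusion H_red ↪ H a homomorphism of group schemes). -/

import Mathlib

open CategoryTheory AlgebraicGeometry Limits Opposite

noncomputable section

namespace Stmt6

abbrev Sp (k : Type) [CommRing k] : Scheme := Spec (CommRingCat.of k)

/-- A (not necessarily commutative) group law on an object of `Over S`:
a functorial group structure on its points. -/
structure GrpLaw {S : Scheme} (X : Over S) where
  grp : ∀ T : Over S, Group (T ⟶ X)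
  comp_mul : ∀ {T T' : Over S} (f : T ⟶ T') (a b : T' ⟶ X),
    letI := grp T; letI := grp T'
    f ≫ (a * b) = (f ≫ a) * (f ≫ b)
  comp_one : ∀ {T T' : Over S} (f : T ⟶ T'),
    letI := grp T; letI := grp T'
    f ≫ (1 : T' ⟶ X) = (1 : T ⟶ X)

/-- A group scheme over `S`. -/
structure GrpSch (S : Scheme) where
  obj : Over S
  law : GrpLaw obj

/-- Homomorphisms of group schemes. -/
def IsGrpHom {S : Scheme} {X Y : Over S} (lX : GrpLaw X) (lY : GrpLaw Y) (φ : X ⟶ Y) : Prop :=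
  ∀ (T : Over S) (a b : T ⟶ X),
    letI := lX.grp T; letI := lY.grp T
    (a * b) ≫ φ = (a ≫ φ) * (b ≫ φ)

def algCl (k : Type) [Field k] : Sp (AlgebraicClosure k) ⟶ Sp k :=
  Spec.map (CommRingCat.ofHom (algebraMap k (AlgebraicClosure k)))

/-!
The division map `(a, b) ↦ a / b` of `H`, restricted to `H_red ×ₖ H_red`, and the unit section
`Spec k ⟶ H` both factor through `H_red` as soon as their sources are reduced; by the one-step
subgroup test this makes the points of `H_red` a subgroup of the points of `H`.

That `H_red ×ₖ H_red` is reduced is a statement about `k`-algebras: `A ⊗[k] B` is reduced if `A` is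
reduced and `B` is geometrically reduced. One may assume `A` of finite type. By the Nullstellensatz
the maps `A → k̄` then separate the elements of `A`, so the maps `A ⊗[k] B → k̄ ⊗[k] B` separate the
elements of `A ⊗[k] B`, and their targets are reduced.
-/

section TensorProduct

open TensorProduct

theorem tensorProduct_eq_zero_of_forall_rTensor_eq_zero {R M N : Type*} [CommRing R]
    [AddCommGroup M] [Module R M] [AddCommGroup N] [Module R N] [Module.Free R N]
    {ι : Type*} {P : ι → Type*} [∀ j, AddCommGroup (P j)] [∀ j, Module R (P j)]
    (f : ∀ j, M →ₗ[R] P j) (hf : ∀ m, (∀ j, f j m = 0) → m = 0)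
    (z : M ⊗[R] N) (hz : ∀ j, (f j).rTensor N z = 0) : z = 0 := by
  let b := Module.Free.chooseBasis R N
  obtain ⟨c, rfl⟩ := TensorProduct.eq_repr_basis_right b z
  suffices c = 0 by simp [this]
  ext i
  refine hf _ fun j ↦ ?_
  have hsum : ((c.mapRange (f j) (map_zero _)).sum fun i p ↦ p ⊗ₜ[R] b i) = 0 := by
    rw [Finsupp.sum_mapRange_index (by simp), ← hz j, map_finsuppSum]
    simp only [LinearMap.rTensor_tmul]
  simpa using DFunLike.congr_fun (TensorProduct.sum_tmul_basis_right_eq_zero b _ hsum) i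

theorem eq_zero_of_forall_algHom_eq_zero {k A : Type*} (K : Type*) [Field k] [CommRing A]
    [Algebra k A] [Algebra.FiniteType k A] [_root_.IsReduced A] [Field K] [Algebra k K]
    [IsAlgClosed K] (a : A) (ha : ∀ φ : A →ₐ[k] K, φ a = 0) : a = 0 := by
  have : IsJacobsonRing A := isJacobsonRing_of_finiteType (A := k)
  have hjac : (⊥ : Ideal A).jacobson = ⊥ := by
    rw [← Ideal.radical_eq_jacobson]
    exact nilradical_eq_zero A
  rw [← Ideal.mem_bot, ← hjac, Ideal.jacobson, Ideal.mem_sInf]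
  rintro m ⟨-, hm⟩
  let := Ideal.Quotient.field m
  have : Module.Finite k (A ⧸ m) := finite_of_finite_type_of_isJacobsonRing k (A ⧸ m)
  let ψ : (A ⧸ m) →ₐ[k] K := IsAlgClosed.lift
  have hψ : ψ (Ideal.Quotient.mk m a) = 0 := ha (ψ.comp (Ideal.Quotient.mkₐ k m))
  exact Ideal.Quotient.eq_zero_iff_mem.mp ((map_eq_zero ψ).mp hψ)

theorem isReduced_tensorProduct_of_finiteType (k A B : Type*) [Field k] [CommRing A] [Ring B]
    [Algebra k A] [Algebra k B] [Algebra.FiniteType k A] [_root_.IsReduced A]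
    [Algebra.IsGeometricallyReduced k B] : _root_.IsReduced (A ⊗[k] B) := by
  refine ⟨fun z hz ↦ tensorProduct_eq_zero_of_forall_rTensor_eq_zero
    (fun φ : A →ₐ[k] AlgebraicClosure k ↦ φ.toLinearMap)
    (eq_zero_of_forall_algHom_eq_zero _) z fun φ ↦ ?_⟩
  exact (hz.map (Algebra.TensorProduct.map φ (AlgHom.id k B))).eq_zero

theorem isReduced_tensorProduct_of_isGeometricallyReduced (k A B : Type*) [Field k] [CommRing A]
    [CommRing B] [Algebra k A] [Algebra k B] [_root_.IsReduced A]
    [Algebra.IsGeometricallyReduced k B] : _root_.IsReduced (B ⊗[k] A) := by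
  refine IsReduced.tensorProduct_of_flat_of_forall_fg fun A' hA' ↦ ?_
  have : Algebra.FiniteType k A' := A'.fg_iff_finiteType.mp hA'
  have : _root_.IsReduced A' := isReduced_of_injective A'.val Subtype.val_injective
  have := isReduced_tensorProduct_of_finiteType k A' B
  exact isReduced_of_injective _ (Algebra.TensorProduct.comm k B A').injective

end TensorProduct

section Pullback

universe u

open TensorProduct in
theorem isReduced_pullback_specMap_algebraMap_iff (R A B : Type u) [CommRing R] [CommRing A]
    [CommRing B] [Algebra R A] [Algebra R B] :
    IsReduced (pullback (Spec.map (CommRingCat.ofHom (algebraMap R A)))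
      (Spec.map (CommRingCat.ofHom (algebraMap R B)))) ↔ _root_.IsReduced (A ⊗[R] B) :=
  (ObjectProperty.prop_iff_of_iso (P := (IsReduced : ObjectProperty Scheme))
    (pullbackSpecIso R A B)).trans (affine_isReduced_iff (.of (A ⊗[R] B)))

variable (k : Type u) [Field k]

theorem isReduced_pullback_Spec_of_algebraicClosure {A B : CommRingCat.{u}}
    (f : Spec A ⟶ Spec (.of k)) (g : Spec B ⟶ Spec (.of k)) (hB : IsReduced (Spec B))
    (h : IsReduced (pullback f
      (Spec.map (CommRingCat.ofHom (algebraMap k (AlgebraicClosure k)))))) :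
    IsReduced (pullback f g) := by
  obtain ⟨φ, rfl⟩ := Spec.map_surjective f
  obtain ⟨ψ, rfl⟩ := Spec.map_surjective g
  algebraize [φ.hom, ψ.hom]
  have : _root_.IsReduced B := (affine_isReduced_iff B).mp hB
  have := (isReduced_pullback_specMap_algebraMap_iff k A (AlgebraicClosure k)).mp h
  have : Algebra.IsGeometricallyReduced k A :=
    (Algebra.isGeometricallyReduced_field_iff k A).mpr
      (isReduced_of_injective _ (Algebra.TensorProduct.comm k (AlgebraicClosure k) A).injective)
  exact (isReduced_pullback_specMap_algebraMap_iff k A B).mpr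
    (isReduced_tensorProduct_of_isGeometricallyReduced k B A)

theorem isReduced_pullback_of_algebraicClosure {X Y : Scheme.{u}}
    (f : X ⟶ Spec (.of k)) (g : Y ⟶ Spec (.of k)) [IsReduced Y]
    (h : IsReduced (pullback f
      (Spec.map (CommRingCat.ofHom (algebraMap k (AlgebraicClosure k)))))) :
    IsReduced (pullback f g) := by
  rw [IsReduced.iff_of_openCover _
    (Scheme.Pullback.openCoverOfLeftRight X.affineCover Y.affineCover f g)]
  rintro ⟨i, j⟩
  have hY : IsReduced (Y.affineCover.X j) := inferInstance
  exact isReduced_pullback_Spec_of_algebraicClosure k (X.affineCover.f i ≫ f)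
    (Y.affineCover.f j ≫ g) hY
    ((IsReduced.iff_of_openCover _ (Scheme.Pullback.openCoverOfLeft X.affineCover f _)).mp h i)

end Pullback

theorem exists_comp_eq_of_isReduced {X Z T : Scheme} (ρ : Z ⟶ X) [IsClosedImmersion ρ]
    [Surjective ρ] [IsReduced T] (f : T ⟶ X) : ∃ g : T ⟶ Z, g ≫ ρ = f := by
  have : IsIso (pullback.snd ρ f) := isIso_of_isClosedImmersion_of_surjective _
  exact ⟨inv (pullback.snd ρ f) ≫ pullback.fst ρ f, by simp [pullback.condition]⟩

theorem exists_over_comp_eq_of_isReduced {S : Scheme} {X Y T : Over S} (i : Y ⟶ X)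
    [IsClosedImmersion i.left] [Surjective i.left] [IsReduced T.left] (f : T ⟶ X) :
    ∃ g : T ⟶ Y, g ≫ i = f := by
  obtain ⟨g, hg⟩ := exists_comp_eq_of_isReduced i.left f.left
  exact ⟨Over.homMk g (by rw [← Over.w i, ← Category.assoc, hg, Over.w f]), by ext1; exact hg⟩

theorem exists_group_of_injective_of_div_mem_range {α G : Type*} [Nonempty α] [Group G]
    (f : α → G) (hf : Function.Injective f) (hdiv : ∀ a b, f a / f b ∈ Set.range f) :
    ∃ _ : Group α, ∀ a b, f (a * b) = f a * f b := by
  let K : Subgroup G := Subgroup.ofDiv (Set.range f) (Set.range_nonempty f) <| by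
    rintro _ ⟨a, rfl⟩ _ ⟨b, rfl⟩
    exact div_eq_mul_inv (f a) (f b) ▸ hdiv a b
  let e : α ≃ K := Equiv.ofInjective f hf
  exact ⟨e.group, fun a b ↦ congrArg Subtype.val (e.apply_symm_apply (e a * e b))⟩

namespace GrpLaw

variable {S : Scheme} {X Y : Over S} (l : GrpLaw X)

theorem comp_div {T T' : Over S} (f : T ⟶ T') (a b : T' ⟶ X) :
    letI := l.grp T; letI := l.grp T'
    f ≫ (a / b) = (f ≫ a) / (f ≫ b) :=
  letI := l.grp T; letI := l.grp T'
  map_div (MonoidHom.mk' (f ≫ ·) (l.comp_mul f)) a b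

theorem exists_isGrpHom_of_forall_div_mem_range (i : Y ⟶ X) [Mono i]
    (hne : ∀ T : Over S, Nonempty (T ⟶ Y))
    (hdiv : ∀ (T : Over S) (a b : T ⟶ Y),
      letI := l.grp T
      (a ≫ i) / (b ≫ i) ∈ Set.range fun c : T ⟶ Y ↦ c ≫ i) :
    ∃ law : GrpLaw Y, IsGrpHom law l i := by
  choose G hG using fun T : Over S ↦
    letI := l.grp T
    exists_group_of_injective_of_div_mem_range (fun a : T ⟶ Y ↦ a ≫ i)
      (fun _ _ ↦ (cancel_mono i).mp) (hdiv T)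
  have comp_mul {T T' : Over S} (f : T ⟶ T') (a b : T' ⟶ Y) :
      f ≫ (a * b) = (f ≫ a) * (f ≫ b) := by
    rw [← cancel_mono i, Category.assoc, hG, hG, l.comp_mul]
    simp only [Category.assoc]
  exact ⟨⟨G, comp_mul, fun f ↦ map_one (MonoidHom.mk' (f ≫ ·) (comp_mul f))⟩, hG⟩

theorem exists_isGrpHom_of_comp_eq_div (i : Y ⟶ X) [Mono i] (e : Over.mk (𝟙 S) ⟶ Y)
    (d : Y ⨯ Y ⟶ Y)
    (hd : letI := l.grp (Y ⨯ Y); d ≫ i = (prod.fst ≫ i) / (prod.snd ≫ i)) :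
    ∃ law : GrpLaw Y, IsGrpHom law l i := by
  refine l.exists_isGrpHom_of_forall_div_mem_range i
    (fun T ↦ ⟨Over.mkIdTerminal.from T ≫ e⟩) fun T a b ↦ ⟨prod.lift a b ≫ d, ?_⟩
  simp only [Category.assoc, hd, l.comp_div, prod.lift_fst_assoc, prod.lift_snd_assoc]

end GrpLaw

theorem reduction_is_subgroup_of_geometrically_reduced_general
    {S : Scheme} [IsReduced S] (H : GrpSch S) (Z : Scheme) (ρ : Z ⟶ H.obj.left)
    [IsClosedImmersion ρ] [Surjective ρ]
    [IsReduced (pullback (ρ ≫ H.obj.hom) (ρ ≫ H.obj.hom))] :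
    ∃ law : GrpLaw (Over.mk (ρ ≫ H.obj.hom)),
      IsGrpHom law H.law (Over.homMk ρ rfl : Over.mk (ρ ≫ H.obj.hom) ⟶ H.obj) := by
  let Y : Over S := Over.mk (ρ ≫ H.obj.hom)
  let i : Y ⟶ H.obj := Over.homMk ρ rfl
  have : IsClosedImmersion i.left := ‹IsClosedImmersion ρ›
  have : Surjective i.left := ‹Surjective ρ›
  have : Mono i := Over.mono_of_mono_left i
  have : IsReduced (Over.mk (𝟙 S)).left := ‹IsReduced S›
  have : IsReduced (pullback Y.hom Y.hom) := ‹_›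
  have : IsReduced (Y ⨯ Y).left := isReduced_of_isOpenImmersion (Over.prodLeftIsoPullback Y Y).hom
  let := H.law.grp
  obtain ⟨e, -⟩ := exists_over_comp_eq_of_isReduced i (1 : Over.mk (𝟙 S) ⟶ H.obj)
  obtain ⟨d, hd⟩ := exists_over_comp_eq_of_isReduced i
    ((prod.fst ≫ i) / (prod.snd ≫ i) : Y ⨯ Y ⟶ H.obj)
  exact H.law.exists_isGrpHom_of_comp_eq_div i e d hd

/-!
STATEMENT 6: let `H` be a group scheme over a field `k` and let `H_red` be its
underlying reduced closed subscheme (formalized as any reduced scheme `Z` with a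
closed immersion `ρ : Z ⟶ H` which is surjective, i.e. a homeomorphism onto `H`).
If `H_red` is geometrically reduced over `k` (its base change to an algebraic
closure is reduced), then `H_red` is a closed subgroup scheme of `H`: the group law
of `H` restricts to a group scheme structure on `H_red` making the inclusion
`H_red ↪ H` a homomorphism of group schemes.
-/
theorem reduction_is_subgroup_of_geometrically_reduced
    (k : Type) [Field k] (H : GrpSch (Sp k))
    (Z : Scheme) (ρ : Z ⟶ H.obj.left)
    (hρ : IsClosedImmersion ρ) (hred : IsReduced Z)
    (hsurj : Function.Surjective ρ.base)
    (hgeom : IsReduced (pullback (ρ ≫ H.obj.hom) (algCl k))) :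
    ∃ law : GrpLaw (Over.mk (ρ ≫ H.obj.hom)),
      IsGrpHom law H.law (Over.homMk ρ rfl : Over.mk (ρ ≫ H.obj.hom) ⟶ H.obj) := by
  have : Surjective ρ := ⟨hsurj⟩
  have := isReduced_pullback_of_algebraicClosure k _ (ρ ≫ H.obj.hom) hgeom
  exact reduction_is_subgroup_of_geometrically_reduced_general H Z ρ

end Stmt6
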